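/- Let F be a field and X any set. Every Lie subalgebra J of the free Lie algebra FreeLie_F(X) on X over F is itself a free Lie algebra; that is, there exist a set Y and an isomorphism of Lie algebras FreeLie_F(Y) ≅ J. -/

import Mathlib

namespace SW
open Module

section PBW
variable {F L I : Type*} [Field F] [LieRing L] [LieAlgebra F L] [LinearOrder I]

/-- Underlying space of the polynomial representation. -/
abbrev PS (F I : Type*) [Field F] := Multiset I →₀ F

theorem exists_min_cons (m : Multiset I) (hm : m ≠ 0) :
    ∃ p : I × Multiset I, m = p.1 ::ₘ p.2 ∧ ∀ k ∈ p.2, p.1 ≤ k := by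
  classical
  have hne : m.toFinset.Nonempty := by
    obtain ⟨a, ha⟩ := Multiset.exists_mem_of_ne_zero hm
    exact ⟨a, by simpa using ha⟩
  have hmem : m.toFinset.min' hne ∈ m := by
    simpa using m.toFinset.min'_mem hne
  refine ⟨(m.toFinset.min' hne, m.erase (m.toFinset.min' hne)), (Multiset.cons_erase hmem).symm, ?_⟩
  intro k hk
  exact Finset.min'_le _ _ (by simpa using Multiset.mem_of_mem_erase hk)

open Classical in
/-- smallest element and the rest -/
noncomputable def minSplit (m : Multiset I) (hm : m ≠ 0) : I × Multiset I :=
  Classical.choose (exists_min_cons m hm)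

theorem minSplit_eq (m : Multiset I) (j : I) (hj : ∀ k ∈ m, j ≤ k) (h : j ::ₘ m ≠ 0) :
    minSplit (j ::ₘ m) h = (j, m) := by
  have hs := Classical.choose_spec (exists_min_cons (j ::ₘ m) h)
  change j ::ₘ m = (minSplit (j ::ₘ m) h).1 ::ₘ (minSplit (j ::ₘ m) h).2 ∧ _ at hs
  change _ ∧ ∀ k ∈ (minSplit (j ::ₘ m) h).2, (minSplit (j ::ₘ m) h).1 ≤ k at hs
  generalize minSplit (j ::ₘ m) h = p at hs
  obtain ⟨a, m'⟩ := p
  obtain ⟨h1, h2⟩ := hs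
  simp only at h1 h2
  have hja : j = a := by
    apply le_antisymm
    · have : a ∈ j ::ₘ m := by rw [h1]; simp
      rcases Multiset.mem_cons.1 this with e | e
      · exact e.ge
      · exact hj _ e
    · have : j ∈ a ::ₘ m' := by rw [← h1]; simp
      rcases Multiset.mem_cons.1 this with e | e
      · exact e.ge
      · exact h2 _ e
  subst hja
  rw [Multiset.cons_inj_right] at h1
  rw [h1]

/-- multiplication by a variable -/
noncomputable def mulVar (F : Type*) [Field F] (i : I) : PS F I →ₗ[F] PS F I :=
  Finsupp.lmapDomain F F (fun m => i ::ₘ m)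

omit [LinearOrder I] in
@[simp] theorem mulVar_single (i : I) (m : Multiset I) (c : F) :
    mulVar F i (Finsupp.single m c) = Finsupp.single (i ::ₘ m) c := by
  simp [mulVar]

open Classical in
/-- one step of the recursion. -/
noncomputable def stepFn (b : Basis I F L) (n : ℕ) (prev : L →ₗ[F] PS F I →ₗ[F] PS F I)
    (i : I) (m : Multiset I) : PS F I :=
  if m.card ≤ n then prev (b i) (Finsupp.single m 1)
  else if h : m = 0 ∨ ∀ j ∈ m, i ≤ j then Finsupp.single (i ::ₘ m) 1
  else
    Finsupp.single (i ::ₘ m) 1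
      + prev (b (minSplit m (not_or.1 h).1).1)
          (prev (b i) (Finsupp.single (minSplit m (not_or.1 h).1).2 1)
            - Finsupp.single (i ::ₘ (minSplit m (not_or.1 h).1).2) 1)
      + prev ⁅b i, b (minSplit m (not_or.1 h).1).1⁆
          (Finsupp.single (minSplit m (not_or.1 h).1).2 1)

/-- truncated action -/
noncomputable def actN (b : Basis I F L) : ℕ → L →ₗ[F] PS F I →ₗ[F] PS F I
  | 0 => b.constr F (fun i => mulVar F i)
  | n + 1 => b.constr F (fun i => Finsupp.lift (PS F I) F (Multiset I) (stepFn b n (actN b n) i))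

theorem actN_succ_single (b : Basis I F L) (n : ℕ) (i : I) (m : Multiset I) :
    actN b (n+1) (b i) (Finsupp.single m 1) = stepFn b n (actN b n) i m := by
  simp [actN]

/-- degree filtration -/
noncomputable abbrev fS (F I : Type*) [Field F] (n : ℕ) : Submodule F (PS F I) :=
  Finsupp.supported F F {m : Multiset I | m.card ≤ n}

omit [LinearOrder I] in
theorem fS_mono {n k : ℕ} (h : n ≤ k) : fS F I n ≤ fS F I k :=
  Finsupp.supported_mono (fun m (hm : m.card ≤ n) => hm.trans h)

omit [LinearOrder I] in
theorem single_mem_fS {n : ℕ} {m : Multiset I} (c : F) (h : m.card ≤ n) :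
    Finsupp.single m c ∈ fS F I n := Finsupp.single_mem_supported F c h

omit [LinearOrder I] in
/-- to check that a linear map sends fS n to a submodule, check on monomials -/
theorem fS_induction {n : ℕ} {M : Type*} [AddCommGroup M] [Module F M] (f : PS F I →ₗ[F] M)
    (N : Submodule F M)
    (h : ∀ m : Multiset I, m.card ≤ n → f (Finsupp.single m 1) ∈ N) {s : PS F I}
    (hs : s ∈ fS F I n) : f s ∈ N := by
  have : fS F I n ≤ N.comap f := by
    rw [fS, Finsupp.supported_eq_span_single, Submodule.span_le]
    rintro _ ⟨m, hm, rfl⟩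
    exact h m hm
  exact this hs

omit [LinearOrder I] in
theorem fS_induction_zero {n : ℕ} {M : Type*} [AddCommGroup M] [Module F M] (f : PS F I →ₗ[F] M)
    (h : ∀ m : Multiset I, m.card ≤ n → f (Finsupp.single m 1) = 0) {s : PS F I}
    (hs : s ∈ fS F I n) : f s = 0 := by
  simpa using fS_induction f ⊥ (by simpa using h) hs

omit [LinearOrder I] in
theorem basis_lin_mem {M : Type*} [AddCommGroup M] [Module F M] (b : Basis I F L)
    (f : L →ₗ[F] M) (N : Submodule F M)
    (h : ∀ i, f (b i) ∈ N) (x : L) : f x ∈ N := by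
  have : (⊤ : Submodule F L) ≤ N.comap f := by
    rw [← b.span_eq, Submodule.span_le]
    rintro _ ⟨i, rfl⟩
    exact h i
  exact this trivial

theorem actN_succ_eq (b : Basis I F L) (n : ℕ) (x : L) {s : PS F I} (hs : s ∈ fS F I n) :
    actN b (n+1) x s = actN b n x s := by
  have h1 : ∀ i, actN b (n+1) (b i) s - actN b n (b i) s = 0 := by
    intro i
    refine fS_induction_zero (actN b (n+1) (b i) - actN b n (b i)) ?_ hs
    intro m hm
    rw [LinearMap.sub_apply, actN_succ_single, stepFn, if_pos hm, sub_self]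
  have := basis_lin_mem b ((actN b (n+1)).flip s - (actN b n).flip s) ⊥ (by simpa using h1) x
  simpa [sub_eq_zero] using this

theorem actN_le_eq (b : Basis I F L) {n k : ℕ} (h : n ≤ k) (x : L) {s : PS F I}
    (hs : s ∈ fS F I n) : actN b k x s = actN b n x s := by
  induction k, h using Nat.le_induction with
  | base => rfl
  | succ k hk ih => rw [actN_succ_eq b k x (fS_mono hk hs), ih]

omit [LinearOrder I] in
theorem mulVar_mem (i : I) {n : ℕ} {s : PS F I} (hs : s ∈ fS F I n) :
    mulVar F i s ∈ fS F I (n+1) := by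
  refine fS_induction _ _ ?_ hs
  intro m hm
  rw [mulVar_single]
  exact single_mem_fS _ (by simpa using hm)

theorem actN_mem_aux (b : Basis I F L) (n : ℕ)
    (h : ∀ i, ∀ s ∈ fS F I n, actN b n (b i) s - mulVar F i s ∈ fS F I n)
    (x : L) {s : PS F I} (hs : s ∈ fS F I n) : actN b n x s ∈ fS F I (n+1) := by
  refine basis_lin_mem b ((actN b n).flip s) _ ?_ x
  intro i
  rw [LinearMap.flip_apply, ← sub_add_cancel (actN b n (b i) s) (mulVar F i s)]
  exact add_mem (fS_mono (Nat.le_succ n) (h i s hs)) (mulVar_mem i hs)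

theorem actN_sub_mem (b : Basis I F L) (n : ℕ) :
    ∀ i, ∀ s ∈ fS F I n, actN b n (b i) s - mulVar F i s ∈ fS F I n := by
  induction n with
  | zero => intro i s hs; simp [actN]
  | succ n ih =>
    intro i s hs
    refine fS_induction (actN b (n+1) (b i) - mulVar F i) _ ?_ hs
    intro m hm
    rw [LinearMap.sub_apply, actN_succ_single, stepFn, mulVar_single]
    split_ifs with h1 h2
    · have := ih i (Finsupp.single m 1) (single_mem_fS _ h1)
      rw [mulVar_single] at this
      exact fS_mono (Nat.le_succ n) this
    · simp
    · obtain ⟨h3, h4⟩ := not_or.1 h2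
      have hs := (Classical.choose_spec (exists_min_cons m h3)).1
      change m = (minSplit m h3).1 ::ₘ (minSplit m h3).2 at hs
      have hc : (minSplit m h3).2.card ≤ n := by
        have := congrArg Multiset.card hs
        rw [Multiset.card_cons] at this
        omega
      rw [add_assoc, add_sub_cancel_left]
      refine add_mem (actN_mem_aux b n ih _ ?_) (actN_mem_aux b n ih _ (single_mem_fS _ hc))
      have := ih i (Finsupp.single (minSplit m h3).2 1) (single_mem_fS _ hc)
      rwa [mulVar_single] at this

theorem actN_mem (b : Basis I F L) (n : ℕ) 
    (x : L) {s : PS F I} (hs : s ∈ fS F I n) : actN b n x s ∈ fS F I (n+1) :=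
  actN_mem_aux b n (actN_sub_mem b n) x hs

/-- the action -/
noncomputable def act (b : Basis I F L) : L →ₗ[F] PS F I →ₗ[F] PS F I :=
  b.constr F (fun i => Finsupp.lift (PS F I) F (Multiset I)
    (fun m => actN b m.card (b i) (Finsupp.single m 1)))

theorem act_eq (b : Basis I F L) {n : ℕ} (x : L) {s : PS F I} (hs : s ∈ fS F I n) :
    act b x s = actN b n x s := by
  have h1 : ∀ i, act b (b i) s - actN b n (b i) s = 0 := by
    intro i
    refine fS_induction_zero (act b (b i) - actN b n (b i)) ?_ hs
    intro m hm
    rw [LinearMap.sub_apply, actN_le_eq b hm (b i) (single_mem_fS _ le_rfl)]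
    simp [act]
  have := basis_lin_mem b ((act b).flip s - (actN b n).flip s) ⊥ (by simpa using h1) x
  simpa [sub_eq_zero] using this

theorem act_mem (b : Basis I F L) (n : ℕ) 
    (x : L) {s : PS F I} (hs : s ∈ fS F I n) : act b x s ∈ fS F I (n+1) := by
  rw [act_eq b x hs]; exact actN_mem b n x hs

theorem act_sub_mem (b : Basis I F L) (n : ℕ) (i : I) (m : Multiset I) (hm : m.card ≤ n) :
    act b (b i) (Finsupp.single m 1) - Finsupp.single (i ::ₘ m) 1 ∈ fS F I n := by
  have := actN_sub_mem b n i _ (single_mem_fS 1 hm)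
  rwa [mulVar_single, ← act_eq b _ (single_mem_fS 1 hm)] at this

theorem act_of_le (b : Basis I F L) (i : I) (m : Multiset I) (h : ∀ j ∈ m, i ≤ j) :
    act b (b i) (Finsupp.single m 1) = Finsupp.single (i ::ₘ m) 1 := by
  rw [act_eq b _ (single_mem_fS 1 le_rfl)]
  rcases hc : m.card with _ | n
  · simp [actN]
  · rw [actN_succ_single, stepFn, if_neg (by omega), dif_pos (Or.inr h)]

theorem act_of_lt (b : Basis I F L) (i j : I) (m : Multiset I) (hij : j < i) (h : ∀ k ∈ m, j ≤ k) :
    act b (b i) (Finsupp.single (j ::ₘ m) 1) =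
      act b (b j) (act b (b i) (Finsupp.single m 1)) + act b ⁅b i, b j⁆ (Finsupp.single m 1) := by
  have hne : j ::ₘ m ≠ 0 := by simp
  have hc : (j ::ₘ m).card = m.card + 1 := by simp
  have hneg : ¬ (j ::ₘ m = 0 ∨ ∀ k ∈ j ::ₘ m, i ≤ k) := by
    rintro (h | h)
    · exact hne h
    · exact absurd (h j (by simp)) (not_le.2 hij)
  have e := act_eq b (b i) (single_mem_fS (1 : F) hc.le)
  rw [e, actN_succ_single, stepFn, if_neg (by omega), dif_neg hneg, minSplit_eq m j h]
  simp only
  rw [← act_eq b (b i) (single_mem_fS (1 : F) le_rfl),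
    ← act_eq b ⁅b i, b j⁆ (single_mem_fS (1 : F) le_rfl),
    ← act_eq b (b j) (act_sub_mem b _ i m le_rfl), map_sub,
    act_of_le b j (i ::ₘ m), Multiset.cons_swap]
  · abel
  · intro k hk
    rcases Multiset.mem_cons.1 hk with rfl | hk
    · exact hij.le
    · exact h k hk

theorem act_comm_of_le (b : Basis I F L) (i j : I) (m : Multiset I) (hij : j < i)
    (h : ∀ k ∈ m, j ≤ k) :
    act b (b i) (act b (b j) (Finsupp.single m 1)) - act b (b j) (act b (b i) (Finsupp.single m 1))
      = act b ⁅b i, b j⁆ (Finsupp.single m 1) := by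
  rw [act_of_le b j m h, act_of_lt b i j m hij h]
  abel

/-- the defect of being a representation, as a bilinear map -/
noncomputable def defect (b : Basis I F L) (s : PS F I) : L →ₗ[F] L →ₗ[F] PS F I :=
  LinearMap.mk₂ F (fun x y => act b x (act b y s) - act b y (act b x s) - act b ⁅x, y⁆ s)
    (by intros; simp; abel) (by intros; simp [smul_sub]) (by intros; simp; abel)
    (by intros; simp [smul_sub])

theorem defect_apply (b : Basis I F L) (s : PS F I) (x y : L) :
    defect b s x y = act b x (act b y s) - act b y (act b x s) - act b ⁅x, y⁆ s := rfl

theorem defect_eq_zero (b : Basis I F L) (s : PS F I)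
    (h : ∀ i j, j < i → defect b s (b i) (b j) = 0) (x y : L) : defect b s x y = 0 := by
  have h2 : defect b s = 0 := by
    refine b.ext fun i => b.ext fun j => ?_
    rcases lt_trichotomy i j with hij | rfl | hij
    · have := h j i hij
      rw [defect_apply, ← lie_skew] at this
      rw [LinearMap.zero_apply, LinearMap.zero_apply, defect_apply, ← neg_eq_zero, ← this]
      simp only [map_neg, LinearMap.neg_apply]
      rw [← lie_skew]
      simp only [map_neg, LinearMap.neg_apply]
      abel
    · simp [defect_apply]
    · simpa using h i j hij
  rw [h2]; rfl

theorem act_lie_fS (b : Basis I F L) (n : ℕ) : ∀ s ∈ fS F I n, ∀ x y : L,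
    act b x (act b y s) - act b y (act b x s) = act b ⁅x, y⁆ s := by
  induction n using Nat.strong_induction_on with
  | _ n ih =>
  intro s hs x y
  have key : ∀ m : Multiset I, m.card ≤ n → ∀ x y, defect b (Finsupp.single m 1) x y = 0 := by
    intro m hm
    refine fun x y => defect_eq_zero b _ ?_ x y
    intro i j hij
    rw [defect_apply, sub_eq_zero]
    by_cases hj : ∀ k ∈ m, j ≤ k
    · exact act_comm_of_le b i j m hij hj
    have hm0 : m ≠ 0 := by rintro rfl; simp at hj
    obtain ⟨⟨k, m'⟩, rfl, hk⟩ := exists_min_cons m hm0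
    simp only at hk hj hm ⊢
    have hkj : k < j := by
      by_contra hc
      push Not at hc
      apply hj
      intro l hl
      rcases Multiset.mem_cons.1 hl with rfl | hl
      · exact hc
      · exact hc.trans (hk l hl)
    have hki := hkj.trans hij
    have hc : m'.card < n := by
      rw [Multiset.card_cons] at hm; omega
    have ih' := ih m'.card hc
    -- commutation past `k` of `act j m'`
    have comm : ∀ p q, k < p → k < q → act b (b p) (act b (b k) (act b (b q) (Finsupp.single m' 1)))
        = act b (b k) (act b (b p) (act b (b q) (Finsupp.single m' 1)))
          + act b ⁅b p, b k⁆ (act b (b q) (Finsupp.single m' 1)) := by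
      intro p q hp hq
      have e1 := act_comm_of_le b p k (q ::ₘ m') hp (by
        intro l hl
        rcases Multiset.mem_cons.1 hl with rfl | hl
        · exact hq.le
        · exact hk l hl)
      have e2 := ih' _ (act_sub_mem b _ q m' le_rfl) (b p) (b k)
      simp only [map_sub] at e2
      rw [← sub_eq_zero] at e1 e2 ⊢
      rw [← add_zero (0 : PS F I)]
      nth_rewrite 1 [← e1]
      rw [← e2]
      abel
    have hm'0 := single_mem_fS (I := I) (1 : F) (le_refl m'.card)
    rw [act_of_lt b j k m' hkj hk, act_of_lt b i k m' hki hk, map_add, map_add,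
      comm i j hki hkj, comm j i hkj hki]
    have e1 := ih' _ hm'0 (b i) ⁅b j, b k⁆
    have e2 := ih' _ hm'0 (b j) ⁅b i, b k⁆
    have e3 := ih' _ hm'0 (b i) (b j)
    have e4 := ih' _ hm'0 (b k) ⁅b i, b j⁆
    have e5 : act b (b k) (Finsupp.single m' 1) = Finsupp.single (k ::ₘ m') 1 := act_of_le b k m' hk
    rw [e5] at e4
    have jac : act b ⁅b i, ⁅b j, b k⁆⁆ (Finsupp.single m' 1)
        = act b ⁅b j, ⁅b i, b k⁆⁆ (Finsupp.single m' 1)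
          - act b ⁅b k, ⁅b i, b j⁆⁆ (Finsupp.single m' 1) := by
      rw [leibniz_lie (b i) (b j) (b k), ← lie_skew (b k) ⁅b i, b j⁆]
      simp only [map_add, map_neg, LinearMap.add_apply, LinearMap.neg_apply]
      abel
    rw [jac] at e1
    have e3' := congrArg (act b (b k)) e3
    rw [map_sub] at e3'
    rw [eq_sub_iff_add_eq] at e1
    rw [sub_eq_iff_eq_add] at e2 e3' e4
    rw [← sub_eq_zero] at e1 e2 e3' e4 ⊢
    have : (0 : PS F I) = 0 + 0 + 0 + 0 := by simp
    rw [this]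
    nth_rewrite 1 [← e1]
    nth_rewrite 1 [← neg_eq_zero.2 e2]
    nth_rewrite 1 [← e3']
    nth_rewrite 1 [← e4]
    abel
  have h2 : ((act b x).comp (act b y) - (act b y).comp (act b x) - act b ⁅x, y⁆) s = 0 := by
    refine fS_induction_zero _ ?_ hs
    intro m hm
    exact key m hm x y
  simpa [sub_eq_zero] using h2

omit [LinearOrder I] in
theorem exists_mem_fS (s : PS F I) : ∃ n, s ∈ fS F I n := by
  refine ⟨s.support.sup Multiset.card, ?_⟩
  rw [Finsupp.mem_supported]
  intro m hm
  exact Finset.le_sup (f := Multiset.card) hm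

theorem act_lie (b : Basis I F L) (x y : L) (s : PS F I) :
    act b ⁅x, y⁆ s = act b x (act b y s) - act b y (act b x s) := by
  obtain ⟨n, hn⟩ := exists_mem_fS s
  exact (act_lie_fS b n s hn x y).symm

theorem act_one (b : Basis I F L) (x : L) :
    act b x (Finsupp.single 0 1) = (b.repr x).mapDomain (fun i => {i}) := by
  have : (act b).flip (Finsupp.single 0 1) =
      (Finsupp.lmapDomain F F (fun i => ({i} : Multiset I))).comp b.repr.toLinearMap := by
    refine b.ext fun i => ?_
    simp only [LinearMap.flip_apply, LinearMap.comp_apply, LinearEquiv.coe_coe, Basis.repr_self,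
      Finsupp.lmapDomain_apply, Finsupp.mapDomain_single]
    exact act_of_le b i 0 (by simp)
  exact congrArg (fun f => f x) this

theorem act_T_mem (b : Basis I F L) (T : Set I) (hT : IsLowerSet T)
    (hlie : ∀ i ∈ T, ∀ j ∈ T, ⁅b i, b j⁆ ∈ Submodule.span F (b '' T)) (n : ℕ) :
    ∀ s ∈ fS F I n, ∀ x ∈ Submodule.span F (b '' T),
      act b x s ∈ Finsupp.supported F F {m : Multiset I | ∃ i ∈ m, i ∈ T} := by
  induction n using Nat.strong_induction_on with
  | _ n ih =>
  intro s hs x hx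
  have red : Submodule.span F (b '' T) ≤ (Finsupp.supported F F
      {m : Multiset I | ∃ i ∈ m, i ∈ T}).comap ((act b).flip s) := by
    rw [Submodule.span_le]
    rintro _ ⟨i, hi, rfl⟩
    change act b (b i) s ∈ Finsupp.supported F F {m : Multiset I | ∃ i ∈ m, i ∈ T}
    refine fS_induction (act b (b i)) _ ?_ hs
    intro m hm
    by_cases h : ∀ j ∈ m, i ≤ j
    · rw [act_of_le b i m h]
      exact Finsupp.single_mem_supported F _ ⟨i, by simp, hi⟩
    have hm0 : m ≠ 0 := by rintro rfl; simp at h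
    obtain ⟨⟨k, m'⟩, rfl, hk⟩ := exists_min_cons m hm0
    simp only at hk h hm ⊢
    have hki : k < i := by
      by_contra hc
      push Not at hc
      apply h
      intro l hl
      rcases Multiset.mem_cons.1 hl with rfl | hl
      · exact hc
      · exact hc.trans (hk l hl)
    have hkT : k ∈ T := hT hki.le hi
    have hc : m'.card < n := by
      rw [Multiset.card_cons] at hm; omega
    have ih' := ih m'.card hc
    rw [act_of_lt b i k m' hki hk]
    refine add_mem ?_ (ih' _ (single_mem_fS _ le_rfl) _ (hlie i hi k hkT))
    have := ih' _ (act_sub_mem b _ i m' le_rfl) (b k) (Submodule.subset_span ⟨k, hkT, rfl⟩)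
    rw [map_sub, act_of_le b k] at this
    · refine (Submodule.sub_mem_iff_left _ ?_).1 this
      exact Finsupp.single_mem_supported F _ ⟨k, by simp, hkT⟩
    · intro l hl
      rcases Multiset.mem_cons.1 hl with rfl | hl
      · exact hki.le
      · exact hk l hl
  exact red hx

end PBW

section PBW2
variable {F L : Type*} [Field F] [LieRing L] [LieAlgebra F L]
attribute [local instance] LieRing.ofAssociativeRing

/-- the right action (anti-representation) as a Lie algebra map to the opposite endomorphisms. -/
noncomputable def actOp {I : Type*} [LinearOrder I] (b : Basis I F L) :
    L →ₗ⁅F⁆ (Module.End F (PS F I))ᵐᵒᵖ where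
  toFun x := MulOpposite.op (-(act b x : Module.End F (PS F I)))
  map_add' x y := by
    apply MulOpposite.unop_injective
    refine LinearMap.ext fun s => ?_
    simp [add_comm]
  map_smul' c x := by
    apply MulOpposite.unop_injective
    refine LinearMap.ext fun s => ?_
    simp
  map_lie' := by
    intro x y
    apply MulOpposite.unop_injective
    rw [LieRing.of_associative_ring_bracket]
    refine LinearMap.ext fun s => ?_
    simp [act_lie]

theorem pbw_left_ideal (J : LieSubalgebra F L) (x : L)
    (h : UniversalEnvelopingAlgebra.ι F x ∈
      Submodule.span (UniversalEnvelopingAlgebra F L)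
        (UniversalEnvelopingAlgebra.ι F '' (J : Set L))) : x ∈ J := by
  classical
  obtain ⟨q, hq⟩ := Submodule.exists_isCompl J.toSubmodule
  let bJ := Basis.ofVectorSpace F J.toSubmodule
  let bq := Basis.ofVectorSpace F q
  let _ : LinearOrder (Basis.ofVectorSpaceIndex F J.toSubmodule) := linearOrderOfSTO WellOrderingRel
  let _ : LinearOrder (Basis.ofVectorSpaceIndex F q) := linearOrderOfSTO WellOrderingRel
  let b0 : Basis (Basis.ofVectorSpaceIndex F J.toSubmodule ⊕ Basis.ofVectorSpaceIndex F q) F L :=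
    (bJ.prod bq).map (Submodule.prodEquivOfIsCompl _ _ hq)
  let b : Basis (Basis.ofVectorSpaceIndex F J.toSubmodule ⊕ₗ Basis.ofVectorSpaceIndex F q) F L :=
    b0.reindex toLex
  have hb : ∀ i, b (toLex (Sum.inl i)) = bJ i := by
    intro i
    simp [b, b0]
  let T : Set (Basis.ofVectorSpaceIndex F J.toSubmodule ⊕ₗ Basis.ofVectorSpaceIndex F q) :=
    Set.range (fun i => toLex (Sum.inl i))
  have hT : IsLowerSet T := by
    rintro _ c hc ⟨i, rfl⟩
    induction c using Lex.rec with
    | h c =>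
    rcases c with c | c
    · exact ⟨c, rfl⟩
    · exact absurd hc (by simp)
  have hspan : Submodule.span F (b '' T) = J.toSubmodule := by
    have h1 : b '' T = J.toSubmodule.subtype '' (Set.range bJ) := by
      ext y
      simp only [T, Set.mem_image, Set.mem_range]
      constructor
      · rintro ⟨_, ⟨i, rfl⟩, rfl⟩
        exact ⟨_, ⟨i, rfl⟩, (hb i).symm⟩
      · rintro ⟨_, ⟨i, rfl⟩, rfl⟩
        exact ⟨_, ⟨i, rfl⟩, hb i⟩
    rw [h1, Submodule.span_image, bJ.span_eq, Submodule.map_top, Submodule.range_subtype]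
  have hlie : ∀ i ∈ T, ∀ j ∈ T, ⁅b i, b j⁆ ∈ Submodule.span F (b '' T) := by
    intro i hi j hj
    have h1 : b i ∈ J.toSubmodule :=
      hspan.le (Submodule.subset_span (Set.mem_image_of_mem b hi))
    have h2 : b j ∈ J.toSubmodule :=
      hspan.le (Submodule.subset_span (Set.mem_image_of_mem b hj))
    rw [hspan]
    exact J.lie_mem h1 h2
  let Φ := UniversalEnvelopingAlgebra.lift F (actOp b)
  have hΦ : ∀ y, Φ (UniversalEnvelopingAlgebra.ι F y) = MulOpposite.op (-(act b y)) := by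
    intro y
    exact UniversalEnvelopingAlgebra.lift_ι_apply F (actOp b) y
  have key : ∀ u ∈ Submodule.span (UniversalEnvelopingAlgebra F L)
        (UniversalEnvelopingAlgebra.ι F '' (J : Set L)), ∀ s,
        (Φ u).unop s ∈ Finsupp.supported F F {m : Multiset _ | ∃ i ∈ m, i ∈ T} := by
    intro u hu
    induction hu using Submodule.span_induction with
    | mem u hu =>
      obtain ⟨y, hy, rfl⟩ := hu
      intro s
      rw [hΦ]
      obtain ⟨n, hn⟩ := exists_mem_fS s
      refine neg_mem (act_T_mem b T hT hlie n s hn y ?_)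
      rw [hspan]
      exact hy
    | zero => intro s; simp
    | add u v _ _ hu hv => intro s; simpa using add_mem (hu s) (hv s)
    | smul c u _ hu =>
      intro s
      rw [smul_eq_mul, map_mul, MulOpposite.unop_mul]
      exact hu _
  have h2 := key _ h (Finsupp.single 0 1)
  rw [hΦ] at h2
  have h3 : act b x (Finsupp.single 0 1) ∈
      Finsupp.supported F F {m : Multiset _ | ∃ i ∈ m, i ∈ T} := by
    have := neg_mem h2
    simpa using this
  rw [act_one] at h3
  have h4 : b.repr x ∈ Finsupp.supported F F T := by
    rw [Finsupp.mem_supported] at h3 ⊢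
    intro i hi
    have : ({i} : Multiset _) ∈ (Finsupp.mapDomain (fun i => ({i} : Multiset _)) (b.repr x)).support := by
      rw [Finsupp.mapDomain_support_of_injective (fun a b h => by simpa using h)]
      exact Finset.mem_image_of_mem _ hi
    obtain ⟨j, hj, hjT⟩ := h3 this
    rw [Multiset.mem_singleton] at hj
    exact hj ▸ hjT
  have h5 : x ∈ Submodule.span F (b '' T) := (Basis.mem_span_image b).2 h4
  rw [hspan] at h5
  exact h5

end PBW2

section Free
attribute [local instance] LieRing.ofAssociativeRing

/-- the free associative algebra with its monomial basis -/
abbrev FA (F X : Type*) [Field F] := MonoidAlgebra F (FreeMonoid X)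

variable {F X : Type*} [Field F]

/-- a generator -/
noncomputable def gen (F : Type*) [Field F] (x : X) : FA F X := MonoidAlgebra.single (FreeMonoid.of x) 1

/-- the map from the free Lie algebra to the free associative algebra -/
noncomputable def toFA (F X : Type*) [Field F] : FreeLieAlgebra F X →ₗ⁅F⁆ FA F X :=
  FreeLieAlgebra.lift F (gen F)

theorem toFA_mem_span (J : LieSubalgebra F (FreeLieAlgebra F X)) (x : FreeLieAlgebra F X)
    (h : toFA F X x ∈ Submodule.span (FA F X) (toFA F X '' (J : Set _))) : x ∈ J := by
  let ψ : FA F X →ₐ[F] UniversalEnvelopingAlgebra F (FreeLieAlgebra F X) :=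
    (FreeAlgebra.lift F (UniversalEnvelopingAlgebra.ι F ∘ FreeLieAlgebra.of F)).comp
      (FreeAlgebra.equivMonoidAlgebraFreeMonoid (R := F) (X := X)).symm.toAlgHom
  have hψ : ∀ y, ψ (toFA F X y) = UniversalEnvelopingAlgebra.ι F y := by
    have : (ψ : FA F X →ₗ⁅F⁆ _).comp (toFA F X) = UniversalEnvelopingAlgebra.ι F := by
      ext x
      have : (FreeAlgebra.equivMonoidAlgebraFreeMonoid (R := F) (X := X)).symm (gen F x)
          = FreeAlgebra.ι F x := by
        rw [AlgEquiv.symm_apply_eq]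
        simp [FreeAlgebra.equivMonoidAlgebraFreeMonoid, gen, MonoidAlgebra.of]
      simp [toFA, ψ, this]
    intro y
    exact LieHom.congr_fun this y
  apply pbw_left_ideal
  rw [← hψ]
  generalize toFA F X x = a at h
  induction h using Submodule.span_induction with
  | mem u hu =>
    obtain ⟨y, hy, rfl⟩ := hu
    rw [hψ]
    exact Submodule.subset_span ⟨y, hy, rfl⟩
  | zero => simp
  | add u v _ _ hu hv => rw [map_add]; exact add_mem hu hv
  | smul c u _ hu =>
    rw [smul_eq_mul, map_mul]
    exact Submodule.smul_mem _ _ hu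

theorem toFA_injective : Function.Injective (toFA F X) := by
  rw [injective_iff_map_eq_zero]
  intro x hx
  have := toFA_mem_span (⊥ : LieSubalgebra F (FreeLieAlgebra F X)) x (by rw [hx]; exact zero_mem _)
  simpa using this


/-- homogeneous component -/
noncomputable def comp (n : ℕ) : FA F X →ₗ[F] FA F X where
  toFun a := MonoidAlgebra.ofCoeff (a.coeff.filter (fun w => w.length = n))
  map_add' a b := by
    apply MonoidAlgebra.coeff_injective
    exact Finsupp.filter_add
  map_smul' c a := by
    apply MonoidAlgebra.coeff_injective
    exact Finsupp.filter_smul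

open Classical in
theorem comp_coeff (n : ℕ) (a : FA F X) (w : FreeMonoid X) :
    (comp n a).coeff w = if w.length = n then a.coeff w else 0 := by
  change (a.coeff.filter (fun w => w.length = n)) w = _
  rw [Finsupp.filter_apply]

theorem FA_ext {a b : FA F X} (h : ∀ w, a.coeff w = b.coeff w) : a = b :=
  MonoidAlgebra.coeff_injective (Finsupp.ext h)

theorem comp_single (n : ℕ) (w : FreeMonoid X) (c : F) :
    comp n (MonoidAlgebra.single w c : FA F X) =
      if w.length = n then MonoidAlgebra.single w c else 0 := by
  classical
  apply FA_ext
  intro v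
  rw [comp_coeff]
  by_cases hw : w = v
  · subst hw
    split_ifs <;> simp
  · split_ifs <;> simp [MonoidAlgebra.coeff_single, hw]

theorem comp_comp (n m : ℕ) (a : FA F X) :
    comp n (comp m a) = if n = m then comp m a else 0 := by
  classical
  apply FA_ext
  intro v
  rw [comp_coeff]
  split_ifs with h1 h2 h2
  · rfl
  · rw [comp_coeff, if_neg (by omega)]; rfl
  · rw [comp_coeff, if_neg (by omega)]
  · rfl

theorem comp_mul (n : ℕ) (a b : FA F X) :
    comp n (a * b) = ∑ p ∈ Finset.HasAntidiagonal.antidiagonal n, comp p.1 a * comp p.2 b := by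
  induction a using MonoidAlgebra.induction_linear with
  | zero => simp
  | add a a' ha ha' => simp only [add_mul, map_add, ha, ha', Finset.sum_add_distrib]
  | single v c =>
    induction b using MonoidAlgebra.induction_linear with
    | zero => simp
    | add a a' ha ha' => simp only [mul_add, map_add, ha, ha', Finset.sum_add_distrib]
    | single w c' =>
      rw [MonoidAlgebra.single_mul_single, comp_single, FreeMonoid.length_mul]
      simp only [comp_single]
      by_cases h : v.length + w.length = n
      · rw [if_pos h, Finset.sum_eq_single (v.length, w.length)]
        · simp [MonoidAlgebra.single_mul_single]
        · rintro ⟨i, j⟩ hij hne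
          by_cases h1 : v.length = i
          · rw [if_neg (show ¬ w.length = j from ?_), mul_zero]
            intro h2
            exact hne (by rw [h1, h2])
          · rw [if_neg h1, zero_mul]
        · intro h1
          exact absurd (Finset.HasAntidiagonal.mem_antidiagonal.2 h) h1
      · rw [if_neg h, Finset.sum_eq_zero]
        rintro ⟨i, j⟩ hij
        rw [Finset.HasAntidiagonal.mem_antidiagonal] at hij
        simp only at hij ⊢
        by_cases h1 : v.length = i
        · rw [if_neg (show ¬ w.length = j by omega), mul_zero]
        · rw [if_neg h1, zero_mul]

theorem comp_lie (n : ℕ) (a b : FA F X) :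
    comp n ⁅a, b⁆ = ∑ p ∈ Finset.HasAntidiagonal.antidiagonal n, ⁅comp p.1 a, comp p.2 b⁆ := by
  simp only [LieRing.of_associative_ring_bracket, map_sub, comp_mul, Finset.sum_sub_distrib]
  congr 1
  exact (Finset.Nat.sum_antidiagonal_swap (f := fun p : ℕ × ℕ => comp p.1 b * comp p.2 a)).symm

/-- elements of degree less than `n` -/
def fil (F X : Type*) [Field F] (n : ℕ) : Submodule F (FA F X) where
  carrier := {a | ∀ k, n ≤ k → comp k a = 0}
  add_mem' ha hb k hk := by rw [map_add, ha k hk, hb k hk, add_zero]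
  zero_mem' k _ := map_zero _
  smul_mem' c a ha k hk := by rw [map_smul, ha k hk, smul_zero]

theorem eq_zero_of_comp {a : FA F X} (h : ∀ k, comp k a = 0) : a = 0 := by
  classical
  apply FA_ext
  intro w
  have := congrArg (fun b => b.coeff w) (h w.length)
  simpa [comp_coeff] using this

theorem exists_fil (a : FA F X) : ∃ n, a ∈ fil F X n := by
  classical
  refine ⟨a.coeff.support.sup FreeMonoid.length + 1, ?_⟩
  intro k hk
  apply FA_ext
  intro w
  rw [comp_coeff]
  split_ifs with h
  · by_contra hne
    have : w.length ≤ _ := Finset.le_sup (f := FreeMonoid.length) (Finsupp.mem_support_iff.2 hne)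
    omega
  · rfl

theorem fil_of_comp {n : ℕ} {a : FA F X} (h : a ∈ fil F X (n+1)) (h0 : comp n a = 0) :
    a ∈ fil F X n := by
  intro k hk
  rcases Nat.eq_or_lt_of_le hk with rfl | hk
  · exact h0
  · exact h k hk

theorem fil_zero {a : FA F X} (h : a ∈ fil F X 0) : a = 0 :=
  eq_zero_of_comp (fun k => h k (Nat.zero_le k))

theorem fil_comp_mul {m n : ℕ} {a b : FA F X} (ha : a ∈ fil F X (m+1)) (hb : b ∈ fil F X (n+1)) :
    comp (m+n) (a * b) = comp m a * comp n b := by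
  rw [comp_mul, Finset.sum_eq_single (m, n)]
  · rintro ⟨i, j⟩ hij hne
    rw [Finset.HasAntidiagonal.mem_antidiagonal] at hij
    simp only at hij ⊢
    by_cases h1 : m + 1 ≤ i
    · rw [ha i h1, zero_mul]
    · by_cases h2 : n + 1 ≤ j
      · rw [hb j h2, mul_zero]
      · exact absurd (show (i, j) = (m, n) by ext <;> simp only <;> omega) hne
  · intro h; simp at h

theorem fil_mul {m n : ℕ} {a b : FA F X} (ha : a ∈ fil F X (m+1)) (hb : b ∈ fil F X (n+1)) :
    a * b ∈ fil F X (m+n+1) := by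
  intro k hk
  rw [comp_mul, Finset.sum_eq_zero]
  rintro ⟨i, j⟩ hij
  rw [Finset.HasAntidiagonal.mem_antidiagonal] at hij
  simp only at hij ⊢
  by_cases h1 : m + 1 ≤ i
  · rw [ha i h1, zero_mul]
  · rw [hb j (by omega), mul_zero]

/-- leading forms of degree `n` of elements of `K` -/
noncomputable def GG (K : LieSubalgebra F (FA F X)) (n : ℕ) : Submodule F (FA F X) :=
  (K.toSubmodule ⊓ fil F X (n+1)).map (comp n)

theorem GG_comp {K : LieSubalgebra F (FA F X)} {n : ℕ} {a : FA F X} (ha : a ∈ GG K n) (k : ℕ) :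
    comp k a = if k = n then a else 0 := by
  obtain ⟨b, -, rfl⟩ := ha
  exact comp_comp k n b

theorem GG_lie {K : LieSubalgebra F (FA F X)} {m n : ℕ} {a b : FA F X} (ha : a ∈ GG K m)
    (hb : b ∈ GG K n) : ⁅a, b⁆ ∈ GG K (m+n) := by
  obtain ⟨a, ⟨ha1, ha2⟩, rfl⟩ := ha
  obtain ⟨b, ⟨hb1, hb2⟩, rfl⟩ := hb
  refine ⟨⁅a, b⁆, ⟨K.lie_mem ha1 hb1, ?_⟩, ?_⟩
  · rw [LieRing.of_associative_ring_bracket]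
    refine sub_mem (fil_mul ha2 hb2) ?_
    rw [add_comm m n]
    exact fil_mul hb2 ha2
  · rw [LieRing.of_associative_ring_bracket, LieRing.of_associative_ring_bracket, map_sub,
      fil_comp_mul ha2 hb2, add_comm m n, fil_comp_mul hb2 ha2]

/-- the Lie subalgebra of elements whose components are all in `GG K`. -/
noncomputable def grAlg (K : LieSubalgebra F (FA F X)) : LieSubalgebra F (FA F X) where
  carrier := {a | ∀ n, comp n a ∈ GG K n}
  add_mem' ha hb n := by rw [map_add]; exact add_mem (ha n) (hb n)
  zero_mem' n := by rw [map_zero]; exact zero_mem _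
  smul_mem' c a ha n := by rw [map_smul]; exact Submodule.smul_mem _ _ (ha n)
  lie_mem' := by
    intro a b ha hb n
    rw [comp_lie]
    refine sum_mem fun p hp => ?_
    rw [← Finset.HasAntidiagonal.mem_antidiagonal.1 hp]
    exact GG_lie (ha _) (hb _)

/-- the Lie subalgebra of elements whose components are all in `K`. -/
noncomputable def homCore (K : LieSubalgebra F (FA F X)) : LieSubalgebra F (FA F X) where
  carrier := {a | ∀ n, comp n a ∈ K}
  add_mem' ha hb n := by rw [map_add]; exact add_mem (ha n) (hb n)
  zero_mem' n := by rw [map_zero]; exact zero_mem _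
  smul_mem' c a ha n := by rw [map_smul]; exact SMulMemClass.smul_mem _ (ha n)
  lie_mem' := by
    intro a b ha hb n
    rw [comp_lie]
    exact sum_mem fun p hp => K.lie_mem (ha _) (hb _)

theorem lift_mem {L Y : Type*} [LieRing L] [LieAlgebra F L] (f : Y → L) (H : LieSubalgebra F L)
    (h : ∀ y, f y ∈ H) (x : FreeLieAlgebra F Y) : FreeLieAlgebra.lift F f x ∈ H := by
  have : H.incl.comp (FreeLieAlgebra.lift F (fun y => (⟨f y, h y⟩ : H))) =
      FreeLieAlgebra.lift F f := by
    ext y; simp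
  rw [← this]
  exact (FreeLieAlgebra.lift F (fun y => (⟨f y, h y⟩ : H)) x).2

theorem comp_mem_range {a : FA F X} (ha : a ∈ (toFA F X).range) (n : ℕ) :
    comp n a ∈ (toFA F X).range := by
  obtain ⟨x, rfl⟩ := ha
  refine lift_mem (gen F) (homCore (toFA F X).range) ?_ x n
  intro y k
  rw [gen, comp_single]
  split_ifs
  · exact ⟨FreeLieAlgebra.of F y, by simp [toFA, gen]⟩
  · exact zero_mem _

theorem coeff_one_mul (a b : FA F X) : (a * b).coeff 1 = a.coeff 1 * b.coeff 1 := by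
  classical
  induction a using MonoidAlgebra.induction_linear with
  | zero => simp
  | add a a' ha ha' => simp [add_mul, ha, ha']
  | single v c =>
    induction b using MonoidAlgebra.induction_linear with
    | zero => simp
    | add a a' ha ha' => simp [mul_add, ha, ha']
    | single w c' =>
      rw [MonoidAlgebra.single_mul_single]
      simp only [MonoidAlgebra.coeff_single, Finsupp.single_apply]
      have : v * w = 1 ↔ v = 1 ∧ w = 1 := by
        rw [← FreeMonoid.length_eq_zero, ← FreeMonoid.length_eq_zero, ← FreeMonoid.length_eq_zero,
          FreeMonoid.length_mul]
        omega
      rw [if_congr this rfl rfl]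
      by_cases h1 : v = 1 <;> by_cases h2 : w = 1 <;> simp [h1, h2]

/-- elements without constant term -/
noncomputable def augLie (F X : Type*) [Field F] : LieSubalgebra F (FA F X) where
  carrier := {a | a.coeff 1 = 0}
  add_mem' {a b} ha hb := by
    change a.coeff 1 = 0 at ha
    change b.coeff 1 = 0 at hb
    simp [ha, hb]
  zero_mem' := by simp
  smul_mem' c a ha := by
    change a.coeff 1 = 0 at ha
    simp [ha]
  lie_mem' := by
    intro a b _ _
    simp [LieRing.of_associative_ring_bracket, coeff_one_mul, mul_comm]

theorem range_aug {a : FA F X} (ha : a ∈ (toFA F X).range) : a.coeff 1 = 0 := by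
  classical
  obtain ⟨x, rfl⟩ := ha
  refine lift_mem (gen F) (augLie F X) ?_ x
  intro y
  change (gen F y).coeff 1 = 0
  rw [gen, MonoidAlgebra.coeff_single, Finsupp.single_apply, if_neg]
  intro h
  have := congrArg FreeMonoid.length h
  simp at this

theorem range_mem_of_span {K : LieSubalgebra F (FA F X)} (hK : K ≤ (toFA F X).range) {a : FA F X}
    (ha : a ∈ (toFA F X).range) (h : a ∈ Submodule.span (FA F X) (K : Set (FA F X))) : a ∈ K := by
  obtain ⟨x, rfl⟩ := ha
  refine toFA_mem_span (K.comap (toFA F X)) x ?_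
  refine Submodule.span_mono ?_ h
  intro b hb
  obtain ⟨y, rfl⟩ := hK hb
  exact ⟨y, hb, rfl⟩

/-- left letter removal -/
noncomputable def der (x : X) : FA F X →ₗ[F] FA F X where
  toFun a := MonoidAlgebra.ofCoeff (a.coeff.comapDomain (fun w => FreeMonoid.of x * w)
    (fun _ _ _ _ h => mul_left_cancel h))
  map_add' a b := by
    apply FA_ext; intro w; rfl
  map_smul' c a := by
    apply FA_ext; intro w; rfl

theorem der_coeff (x : X) (a : FA F X) (w : FreeMonoid X) :
    (der x a).coeff w = a.coeff (FreeMonoid.of x * w) := rfl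

theorem der_mul (x : X) (a b : FA F X) :
    der x (a * b) = der x a * b + a.coeff 1 • der x b := by
  classical
  induction a using MonoidAlgebra.induction_linear with
  | zero => simp
  | add a a' ha ha' => simp only [add_mul, map_add, ha, ha', MonoidAlgebra.coeff_add,
      Finsupp.add_apply, add_smul]; abel
  | single v c =>
    induction v using FreeMonoid.casesOn with
    | one =>
      have h1 : der x (MonoidAlgebra.single 1 c : FA F X) = 0 := by
        apply FA_ext
        intro w
        rw [der_coeff, MonoidAlgebra.coeff_single, Finsupp.single_apply, if_neg]
        · rfl
        · intro h
          have := congrArg FreeMonoid.length h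
          simp at this
          omega
      have h2 : (MonoidAlgebra.single 1 c : FA F X) = c • 1 := by
        rw [MonoidAlgebra.one_def, MonoidAlgebra.smul_single]; simp
      rw [h1, zero_mul, zero_add, h2, smul_mul_assoc, one_mul, map_smul]
      simp
    | of_mul y v =>
      have h1 : (MonoidAlgebra.single (FreeMonoid.of y * v) c : FA F X).coeff 1 = 0 := by
        rw [MonoidAlgebra.coeff_single, Finsupp.single_apply, if_neg]
        intro h
        have := congrArg FreeMonoid.length h
        simp at this
      rw [h1, zero_smul, add_zero]
      have h2 : ∀ (u : FreeMonoid X) (d : F),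
          der x (MonoidAlgebra.single (FreeMonoid.of y * u) d : FA F X)
          = if x = y then MonoidAlgebra.single u d else 0 := by
        intro u d
        apply FA_ext
        intro w
        rw [der_coeff, MonoidAlgebra.coeff_single, Finsupp.single_apply]
        by_cases hxy : x = y
        · subst hxy
          simp [MonoidAlgebra.coeff_single, Finsupp.single_apply]
        · rw [if_neg, if_neg hxy]
          · rfl
          · intro h
            have := congrArg FreeMonoid.toList h
            simp only [FreeMonoid.toList_of_mul, List.cons.injEq] at this
            exact hxy this.1.symm
      induction b using MonoidAlgebra.induction_linear with
      | zero => simp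
      | add a a' ha ha' => simp only [mul_add, map_add, ha, ha']
      | single w c' =>
        rw [MonoidAlgebra.single_mul_single, mul_assoc, h2, h2]
        split_ifs
        · rw [MonoidAlgebra.single_mul_single]
        · simp

theorem comp_zero_eq (a : FA F X) : comp 0 a = a.coeff 1 • 1 := by
  classical
  apply FA_ext
  intro w
  rw [comp_coeff, MonoidAlgebra.coeff_smul_apply, MonoidAlgebra.one_def,
    MonoidAlgebra.coeff_single, Finsupp.single_apply, if_congr FreeMonoid.length_eq_zero rfl rfl]
  by_cases h : w = 1
  · subst h; simp
  · rw [if_neg h, if_neg (Ne.symm h), smul_zero]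

end Free

section WeakAlg
attribute [local instance] LieRing.ofAssociativeRing

variable {F X Y : Type*} [Field F]

theorem comp_mul_hom {h a : FA F X} {e : ℕ} (hh : ∀ k, comp k h = if k = e then h else 0) (n : ℕ) :
    comp n (a * h) = if e ≤ n then comp (n - e) a * h else 0 := by
  rw [comp_mul]
  split_ifs with he
  · rw [Finset.sum_eq_single (n - e, e)]
    · simp [hh]
    · rintro ⟨i, j⟩ hij hne
      rw [Finset.HasAntidiagonal.mem_antidiagonal] at hij
      simp only at hij ⊢
      rw [hh, if_neg, mul_zero]
      intro hj
      exact hne (by ext <;> simp only <;> omega)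
    · intro h1
      exact absurd (Finset.HasAntidiagonal.mem_antidiagonal.2 (by simp only; omega)) h1
  · apply Finset.sum_eq_zero
    rintro ⟨i, j⟩ hij
    rw [Finset.HasAntidiagonal.mem_antidiagonal] at hij
    simp only at hij ⊢
    rw [hh, if_neg (by omega), mul_zero]

/-- independence condition for a family of homogeneous elements -/
def Ind (h : Y → FA F X) (d : Y → ℕ) : Prop :=
  ∀ (n : ℕ) (s : Finset Y) (c : Y → F), (∀ y ∈ s, d y = n) →
    (∑ y ∈ s, c y • h y) ∈ Submodule.span (FA F X) (h '' {z | d z < n}) → ∀ y ∈ s, c y = 0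

theorem wa_const {h : Y → FA F X} {d : Y → ℕ}
    (hh : ∀ y k, comp k (h y) = if k = d y then h y else 0) (ind : Ind h d)
    (s : Finset Y) (a : Y → FA F X) (hrel : ∑ y ∈ s, a y * h y = 0) :
    ∀ y ∈ s, (a y).coeff 1 = 0 := by
  classical
  intro y0 hy0
  refine ind (d y0) (s.filter (fun y => d y = d y0)) (fun y => (a y).coeff 1) ?_ ?_ y0 ?_
  · intro y hy; exact (Finset.mem_filter.1 hy).2
  · have h1 := congrArg (comp (d y0)) hrel
    rw [map_sum, map_zero, ← Finset.sum_filter_add_sum_filter_not s (fun y => d y = d y0)] at h1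
    have h2 : ∑ y ∈ s.filter (fun y => d y = d y0), comp (d y0) (a y * h y) =
        ∑ y ∈ s.filter (fun y => d y = d y0), (a y).coeff 1 • h y := by
      refine Finset.sum_congr rfl fun y hy => ?_
      have hd := (Finset.mem_filter.1 hy).2
      rw [comp_mul_hom (hh y), if_pos hd.le, hd, Nat.sub_self, comp_zero_eq, smul_mul_assoc,
        one_mul]
    rw [h2] at h1
    rw [eq_neg_of_add_eq_zero_left h1]
    refine neg_mem (sum_mem fun y hy => ?_)
    have hd := (Finset.mem_filter.1 hy).2
    rw [comp_mul_hom (hh y)]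
    split_ifs with hle
    · refine Submodule.smul_mem _ _ (Submodule.subset_span ⟨y, ?_, rfl⟩)
      exact lt_of_le_of_ne hle hd
    · exact zero_mem _
  · exact Finset.mem_filter.2 ⟨hy0, rfl⟩

theorem wa_hom {h : Y → FA F X} {d : Y → ℕ}
    (hh : ∀ y k, comp k (h y) = if k = d y then h y else 0) (ind : Ind h d)
    (s : Finset Y) (a : Y → FA F X) (hrel : ∑ y ∈ s, a y * h y = 0) :
    ∀ y ∈ s, a y = 0 := by
  intro y hy
  apply FA_ext
  intro w
  change _ = (0 : F)
  induction w using FreeMonoid.recOn generalizing a with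
  | one => exact wa_const hh ind s a hrel y hy
  | of_mul x w ih =>
    rw [← der_coeff]
    refine ih (fun y => der x (a y)) ?_
    have h1 := congrArg (der x) hrel
    rw [map_sum, map_zero] at h1
    rw [← h1]
    refine Finset.sum_congr rfl fun z hz => ?_
    rw [der_mul, wa_const hh ind s a hrel z hz, zero_smul, add_zero]

theorem wa_fil {h h' : Y → FA F X} {d : Y → ℕ}
    (hh : ∀ y k, comp k (h y) = if k = d y then h y else 0) (ind : Ind h d)
    (hf : ∀ y, h' y ∈ fil F X (d y + 1)) (hc : ∀ y, comp (d y) (h' y) = h y)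
    (s : Finset Y) (a : Y → FA F X) (hrel : ∑ y ∈ s, a y * h' y = 0) :
    ∀ y ∈ s, a y = 0 := by
  classical
  have key : ∀ N, (∀ y ∈ s, ∀ k, N ≤ k + d y → comp k (a y) = 0) → ∀ y ∈ s, a y = 0 := by
    intro N
    induction N with
    | zero =>
      intro hN y hy
      exact eq_zero_of_comp fun k => hN y hy k (Nat.zero_le _)
    | succ N ih =>
      intro hN
      apply ih
      have h1 := congrArg (comp N) hrel
      rw [map_sum, map_zero] at h1
      have h2 : ∀ y ∈ s, comp N (a y * h' y) =
          (if d y ≤ N then comp (N - d y) (a y) else 0) * h y := by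
        intro y hy
        split_ifs with hle
        · have e : N = (N - d y) + d y := by omega
          conv_lhs => rw [e]
          rw [fil_comp_mul _ (hf y), hc]
          intro k hk
          exact hN y hy k (by omega)
        · have : a y = 0 := eq_zero_of_comp fun k => hN y hy k (by omega)
          rw [this]; simp
      rw [Finset.sum_congr rfl h2] at h1
      have h3 := wa_hom hh ind s _ h1
      intro y hy k hk
      rcases Nat.eq_or_lt_of_le hk with hk | hk
      · have := h3 y hy
        rw [if_pos (by omega)] at this
        rwa [show N - d y = k by omega] at this
      · exact hN y hy k (by omega)
  choose m hm using fun y => exists_fil (a y)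
  refine key (s.sup (fun y => m y + d y)) ?_
  intro y hy k hk
  have : m y + d y ≤ _ := Finset.le_sup (f := fun y => m y + d y) hy
  exact hm y k (by omega)

/-- right letter removal -/
noncomputable def derR (x : X) : FA F X →ₗ[F] FA F X where
  toFun a := MonoidAlgebra.ofCoeff (a.coeff.comapDomain (fun w => w * FreeMonoid.of x)
    (fun _ _ _ _ h => mul_right_cancel h))
  map_add' a b := by
    apply FA_ext; intro w; rfl
  map_smul' c a := by
    apply FA_ext; intro w; rfl

theorem derR_coeff (x : X) (a : FA F X) (w : FreeMonoid X) :
    (derR x a).coeff w = a.coeff (w * FreeMonoid.of x) := rfl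

theorem word_cases (w : FreeMonoid X) : w = 1 ∨ ∃ v x, w = v * FreeMonoid.of x := by
  rcases List.eq_nil_or_concat (FreeMonoid.toList w) with h | ⟨v, x, h⟩
  · left; exact h
  · right; refine ⟨FreeMonoid.ofList v, x, ?_⟩
    apply FreeMonoid.toList.injective
    rw [h]; simp

theorem derR_expand (p : FA F X) : ∃ s : Finset X, ∀ t, s ⊆ t →
    p = p.coeff 1 • 1 + ∑ x ∈ t, derR x p * gen F x := by
  classical
  induction p using MonoidAlgebra.induction_linear with
  | zero => exact ⟨∅, by simp⟩
  | add a b ha hb =>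
    obtain ⟨s, hs⟩ := ha
    obtain ⟨t, ht⟩ := hb
    refine ⟨s ∪ t, fun u hu => ?_⟩
    have h1 := hs u (Finset.union_subset_left hu)
    have h2 := ht u (Finset.union_subset_right hu)
    conv_lhs => rw [h1, h2]
    simp only [map_add, add_mul, Finset.sum_add_distrib, MonoidAlgebra.coeff_add,
      Finsupp.add_apply, add_smul]
    abel
  | single w c =>
    rcases word_cases w with rfl | ⟨v, x, rfl⟩
    · refine ⟨∅, fun t _ => ?_⟩
      rw [Finset.sum_eq_zero, add_zero]
      · apply FA_ext; intro w
        simp [MonoidAlgebra.one_def, MonoidAlgebra.coeff_single, Finsupp.single_apply]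
      · intro x _
        have : derR x (MonoidAlgebra.single 1 c : FA F X) = 0 := by
          apply FA_ext
          intro w
          rw [derR_coeff, MonoidAlgebra.coeff_single, Finsupp.single_apply, if_neg]
          · rfl
          · intro h
            have := congrArg FreeMonoid.length h
            simp at this
        rw [this, zero_mul]
    · refine ⟨{x}, fun t ht => ?_⟩
      have h2 : ∀ y, derR y (MonoidAlgebra.single (v * FreeMonoid.of x) c : FA F X)
          = if y = x then MonoidAlgebra.single v c else 0 := by
        intro y
        apply FA_ext
        intro w
        rw [derR_coeff, MonoidAlgebra.coeff_single, Finsupp.single_apply]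
        by_cases hxy : y = x
        · subst hxy
          simp [MonoidAlgebra.coeff_single, Finsupp.single_apply]
        · rw [if_neg, if_neg hxy]
          · rfl
          · intro h
            have := congrArg FreeMonoid.toList h
            simp only [FreeMonoid.toList_mul, FreeMonoid.toList_of] at this
            have := (List.append_inj_right' this rfl)
            simp at this
            exact hxy this.symm
      rw [Finset.sum_eq_single x, h2, if_pos rfl, gen, MonoidAlgebra.single_mul_single, mul_one]
      · rw [MonoidAlgebra.coeff_single, Finsupp.single_apply, if_neg, zero_smul, zero_add]
        intro h
        have := congrArg FreeMonoid.length h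
        simp at this
      · intro y _ hy
        rw [h2, if_neg hy, zero_mul]
      · intro h; exact absurd (ht (Finset.mem_singleton_self x)) h

/-- the substitution homomorphism -/
noncomputable def subst (h : Y → FA F X) : FA F Y →ₐ[F] FA F X :=
  MonoidAlgebra.lift F (FA F X) (FreeMonoid Y) (FreeMonoid.lift h)

theorem subst_gen (h : Y → FA F X) (y : Y) : subst h (gen F y) = h y := by
  simp [subst, gen]

theorem subst_injective (h : Y → FA F X) (h1 : ∀ y, (h y).coeff 1 = 0)
    (hi : ∀ (s : Finset Y) (a : Y → FA F X), ∑ y ∈ s, a y * h y = 0 → ∀ y ∈ s, a y = 0) :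
    Function.Injective (subst h) := by
  classical
  rw [injective_iff_map_eq_zero]
  have key : ∀ n, ∀ p, subst h p = 0 → ∀ w : FreeMonoid Y, w.length = n → p.coeff w = 0 := by
    intro n
    induction n with
    | zero =>
      intro p hp w hw
      rw [FreeMonoid.length_eq_zero] at hw
      subst hw
      obtain ⟨s, hs⟩ := derR_expand p
      have := hs s (le_refl _)
      rw [this, map_add, map_sum, map_smul, map_one (subst h)] at hp
      have := congrArg (fun a => a.coeff 1) hp
      simpa [coeff_one_mul, subst_gen, h1] using this
    | succ n ih =>
      intro p hp w hw
      have hp1 : p.coeff 1 = 0 := by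
        obtain ⟨s, hs⟩ := derR_expand p
        have := hs s (le_refl _)
        rw [this, map_add, map_sum, map_smul, map_one (subst h)] at hp
        have := congrArg (fun a => a.coeff 1) hp
        simpa [coeff_one_mul, subst_gen, h1] using this
      rcases word_cases w with rfl | ⟨v, y, rfl⟩
      · simp at hw
      · rw [← derR_coeff]
        refine ih _ ?_ v (by simpa using hw)
        obtain ⟨s, hs⟩ := derR_expand p
        have := hs (insert y s) (Finset.subset_insert _ _)
        rw [hp1, zero_smul, zero_add] at this
        rw [this, map_sum] at hp
        simp only [map_mul, subst_gen] at hp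
        exact hi _ _ hp y (Finset.mem_insert_self _ _)
  intro p hp
  exact FA_ext fun w => key _ p hp w rfl

theorem lift_injective (h : Y → FA F X) (h1 : ∀ y, (h y).coeff 1 = 0)
    (hi : ∀ (s : Finset Y) (a : Y → FA F X), ∑ y ∈ s, a y * h y = 0 → ∀ y ∈ s, a y = 0) :
    Function.Injective (FreeLieAlgebra.lift F h) := by
  have : (subst h : FA F Y →ₗ⁅F⁆ FA F X).comp (toFA F Y) = FreeLieAlgebra.lift F h := by
    ext y
    simp [toFA, subst_gen]
  rw [← this]
  exact (subst_injective h h1 hi).comp toFA_injective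

end WeakAlg

section Assembly
universe u v
attribute [local instance] LieRing.ofAssociativeRing

variable {F : Type u} {X : Type v} [Field F]

/-- the left ideal generated by the leading forms of degree less than `n` -/
noncomputable def II (K : LieSubalgebra F (FA F X)) (n : ℕ) : Submodule F (FA F X) :=
  (Submodule.span (FA F X) {a | ∃ m, m < n ∧ a ∈ GG K m}).restrictScalars F

theorem exists_CC (K : LieSubalgebra F (FA F X)) (n : ℕ) : ∃ C : Submodule F (FA F X),
    C ≤ GG K n ∧ (∀ x ∈ C, x ∈ II K n → x = 0) ∧
    ∀ g ∈ GG K n, ∃ c ∈ C, ∃ t ∈ GG K n, t ∈ II K n ∧ g = c + t := by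
  obtain ⟨D, hD⟩ := (GG K n ⊓ II K n).exists_isCompl
  refine ⟨D ⊓ GG K n, inf_le_right, ?_, ?_⟩
  · intro x hx hx2
    exact Submodule.disjoint_def.1 hD.disjoint x ⟨hx.2, hx2⟩ hx.1
  · intro g hg
    have : g ∈ (GG K n ⊓ II K n) ⊔ D := by rw [hD.sup_eq_top]; trivial
    obtain ⟨t, ht, c, hc, rfl⟩ := Submodule.mem_sup.1 this
    refine ⟨c, ⟨hc, ?_⟩, t, ht.1, ht.2, add_comm _ _⟩
    have := sub_mem hg ht.1
    rwa [add_sub_cancel_left] at this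

theorem exists_free (K : LieSubalgebra F (FA F X)) (hK : K ≤ (toFA F X).range) :
    ∃ (Y : Type (max u v)) (h : Y → FA F X), Function.Injective (FreeLieAlgebra.lift F h) ∧
      (FreeLieAlgebra.lift F h).range = K := by
  classical
  choose C hC1 hC2 hC3 using exists_CC K
  let b := fun n => Basis.ofVectorSpace F (C n)
  let Y := Σ n, Basis.ofVectorSpaceIndex F (C n)
  let d : Y → ℕ := fun y => y.1
  let h : Y → FA F X := fun y => (b y.1 y.2 : FA F X)
  have hC : ∀ y, h y ∈ C (d y) := fun y => (b y.1 y.2).2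
  have hG : ∀ y, h y ∈ GG K (d y) := fun y => hC1 _ (hC y)
  have hG' : ∀ y, ∃ a, a ∈ K ∧ a ∈ fil F X (d y + 1) ∧ comp (d y) a = h y := by
    intro y
    obtain ⟨a, ha, e⟩ := hG y
    exact ⟨a, ha.1, ha.2, e⟩
  choose h' h'K h'f h'c using hG'
  have hh : ∀ y k, comp k (h y) = if k = d y then h y else 0 := fun y k => GG_comp (hG y) k
  have ind : Ind h d := by
    intro n s c hs hmem y hy
    have h1 : (∑ y ∈ s, c y • h y) = 0 := by
      refine hC2 n _ (sum_mem fun z hz => ?_) ?_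
      · rw [← hs z hz]
        exact Submodule.smul_mem _ _ (hC z)
      · refine Submodule.span_mono ?_ hmem
        rintro _ ⟨z, hz, rfl⟩
        exact ⟨d z, hz, hG z⟩
    let mk : Basis.ofVectorSpaceIndex F (C n) → Y := fun i => ⟨n, i⟩
    have hinj : Function.Injective mk := by
      intro i i' hii
      exact eq_of_heq (Sigma.mk.inj hii).2
    have h2 := Finset.sum_preimage mk s
      hinj.injOn (fun y => c y • h y) (by
        rintro ⟨m, i⟩ hz hne
        have : m = n := hs _ hz
        subst this
        exact absurd ⟨i, rfl⟩ hne)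
    rw [h1] at h2
    have li : LinearIndependent F (fun i => (b n i : FA F X)) :=
      (b n).linearIndependent.map' (C n).subtype (Submodule.ker_subtype _)
    obtain ⟨m, i⟩ := y
    have : m = n := hs _ hy
    subst this
    exact linearIndependent_iff'.1 li _ (fun i => c ⟨m, i⟩) h2 i (Finset.mem_preimage.2 hy)
  refine ⟨Y, h', lift_injective h' (fun y => range_aug (hK (h'K y)))
    (wa_fil hh ind h'f h'c), ?_⟩
  set K' := (FreeLieAlgebra.lift F h').range with hK'
  have hle : K' ≤ K := by
    rintro _ ⟨x, rfl⟩
    exact lift_mem h' K h'K x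
  have hGK' : ∀ y, h y ∈ GG K' (d y) := fun y =>
    ⟨h' y, ⟨⟨FreeLieAlgebra.of F y, by simp⟩, h'f y⟩, h'c y⟩
  have hCK' : ∀ n, C n ≤ GG K' n := by
    intro n x hx
    have h1 : Submodule.span F (Set.range (b n)) ≤ (GG K' n).comap (C n).subtype := by
      rw [Submodule.span_le]
      rintro _ ⟨i, rfl⟩
      exact hGK' ⟨n, i⟩
    rw [(b n).span_eq] at h1
    exact h1 (show (⟨x, hx⟩ : C n) ∈ ⊤ from trivial)
  have hGr : ∀ n, ∀ a ∈ GG K n, a ∈ (toFA F X).range := by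
    rintro n _ ⟨a, ha, rfl⟩
    exact comp_mem_range (hK ha.1) n
  have hGG : ∀ n, GG K n ≤ GG K' n := by
    intro n
    induction n using Nat.strong_induction_on with
    | _ n ih =>
      intro g hg
      obtain ⟨c, hc, t, ht1, ht2, rfl⟩ := hC3 n g hg
      refine add_mem (hCK' n hc) ?_
      have htr := hGr n t ht1
      have h1 : t ∈ grAlg K' ⊓ (toFA F X).range := by
        refine range_mem_of_span inf_le_right htr (Submodule.span_mono ?_ ht2)
        rintro a ⟨m, hm, ha⟩
        refine ⟨?_, hGr m a ha⟩
        intro k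
        rw [GG_comp ha]
        split_ifs with hk
        · subst hk; exact ih _ hm ha
        · exact zero_mem _
      have h2 := h1.1 n
      rwa [GG_comp ht1, if_pos rfl] at h2
  apply le_antisymm hle
  have key : ∀ n, ∀ a ∈ K, a ∈ fil F X n → a ∈ K' := by
    intro n
    induction n with
    | zero => intro a _ ha; rw [fil_zero ha]; exact zero_mem _
    | succ n ih =>
      intro a haK ha
      obtain ⟨c, ⟨hc1, hc2⟩, hc3⟩ := hGG n ⟨a, ⟨haK, ha⟩, rfl⟩
      have := ih (a - c) (sub_mem haK (hle hc1))
        (fil_of_comp (sub_mem ha hc2) (by rw [map_sub, hc3, sub_self]))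
      have := add_mem this hc1
      rwa [sub_add_cancel] at this
  intro a ha
  obtain ⟨n, hn⟩ := exists_fil a
  exact key n a ha hn

theorem main_thm (J : LieSubalgebra F (FreeLieAlgebra F X)) :
    ∃ (Y : Type (max u v)) (_e : FreeLieAlgebra F Y ≃ₗ⁅F⁆ J), True := by
  obtain ⟨Y, h, hinj, hr⟩ := exists_free (J.map (toFA F X)) (by
    rintro _ ⟨x, -, rfl⟩
    exact ⟨x, rfl⟩)
  have hm : ∀ y, ∃ x : J, toFA F X x = h y := by
    intro y
    have : h y ∈ J.map (toFA F X) := by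
      rw [← hr]; exact ⟨FreeLieAlgebra.of F y, by simp⟩
    obtain ⟨x, hx, e⟩ := this
    exact ⟨⟨x, hx⟩, e⟩
  choose j hj using hm
  let g : FreeLieAlgebra F Y →ₗ⁅F⁆ J := FreeLieAlgebra.lift F j
  have hg : ∀ x, toFA F X (g x) = FreeLieAlgebra.lift F h x := by
    have : ((toFA F X).comp J.incl).comp g = FreeLieAlgebra.lift F h := by
      ext y
      simp [g, hj]
    intro x
    exact LieHom.congr_fun this x
  refine ⟨Y, LieEquiv.ofBijective g ⟨?_, ?_⟩, trivial⟩
  · intro a a' haa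
    apply hinj
    rw [← hg, ← hg, haa]
  · intro z
    have : toFA F X z ∈ (FreeLieAlgebra.lift F h).range := by
      rw [hr]; exact ⟨z, z.2, rfl⟩
    obtain ⟨x, hx⟩ := this
    refine ⟨x, Subtype.ext (toFA_injective ?_)⟩
    rw [hg]; exact hx

end Assembly

end SW



/-- **The Schreier property for free Lie algebras.**
Over a field `F`, every Lie subalgebra `J` of the free Lie algebra on a set `X` is itself a
free Lie algebra: there is a set `Y` and an isomorphism of Lie algebras
`FreeLie_F(Y) ≃ J`. -/
theorem stmt_6.{u, v} (F : Type u) [Field F] (X : Type v)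
    (J : LieSubalgebra F (FreeLieAlgebra F X)) :
    ∃ (Y : Type (max u v)) (_e : FreeLieAlgebra F Y ≃ₗ⁅F⁆ J), True := by
  exact SW.main_thm J
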